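/- The universal enveloping algebra U(W₊) of the positive Witt algebra W₊ is neither left noetherian nor right noetherian. -/

import Mathlib

/-!
Statement 0: The universal enveloping algebra U(W₊) of the positive Witt algebra W₊
is neither left noetherian nor right noetherian.

Here `k` is a field of characteristic 0, and the positive Witt algebra is realized as the
Lie subalgebra of the Lie algebra of k-linear derivations of `k[x]` spanned by the derivations
`e n = x^(n+1) d/dx` for `n ≥ 1`.  Right noetherianity of a ring `A` is expressed as left
noetherianity of the opposite ring `Aᵐᵒᵖ`.
-/

noncomputable section

open Polynomial

/-- The derivation `e n = x^(n+1) d/dx` of `k[x]`. -/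
def wittGen (k : Type*) [Field k] (n : ℕ) : Derivation k k[X] k[X] :=
  (X : k[X]) ^ (n + 1) • Polynomial.derivative'

/-- The positive Witt algebra `W₊`, i.e. the Lie subalgebra of derivations of `k[x]`
spanned by `e n = x^(n+1) d/dx` for `n ≥ 1`. -/
def positiveWitt (k : Type*) [Field k] : LieSubalgebra k (Derivation k k[X] k[X]) :=
  LieSubalgebra.lieSpan k _ {d | ∃ n : ℕ, 1 ≤ n ∧ d = wittGen k n}

attribute [local instance] LieRing.ofAssociativeRing

/-- A derivation `d` of `k[x]` is `d(x) • d/dx`. -/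
theorem polynomialDerivation_apply {k : Type*} [Field k] (d : Derivation k k[X] k[X]) (g : k[X]) :
    d g = d X * derivative g := by
  have h : d = d X • Polynomial.derivative' := by
    ext
    simp [Polynomial.derivative']
  conv_lhs => rw [h]
  simp [Polynomial.derivative']

/-- The representation of the derivations of `k[x]` on `k[x] ⊕ k` extending the trivial
representation by the natural one, via the divergence cocycle of `f d/dx`, the derivative of `f`. -/
def divergenceRep (k : Type*) [Field k] :
    Derivation k k[X] k[X] →ₗ⁅k⁆ Module.End k (k[X] × k) where
  toFun d :=
    { toFun := fun v => (d v.1 + v.2 • derivative (d X), 0)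
      map_add' := fun v w => by
        ext1
        · simp only [Prod.fst_add, Prod.snd_add, map_add, add_smul]
          abel
        · simp
      map_smul' := fun c v => by
        ext1 <;> simp [mul_smul] }
  map_add' d d' := by
    refine LinearMap.ext fun v => Prod.ext ?_ ?_
    · simp only [Derivation.add_apply, map_add, smul_add, LinearMap.add_apply, Prod.fst_add,
        LinearMap.coe_mk, AddHom.coe_mk]
      abel
    · simp
  map_smul' c d := by
    refine LinearMap.ext fun v => Prod.ext ?_ ?_
    · simp [smul_comm c]
    · simp
  map_lie' {d d'} := by
    obtain ⟨f, hf⟩ : ∃ f, ∀ g, d g = f * derivative g := ⟨_, polynomialDerivation_apply d⟩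
    obtain ⟨f', hf'⟩ : ∃ f', ∀ g, d' g = f' * derivative g := ⟨_, polynomialDerivation_apply d'⟩
    refine LinearMap.ext fun v => Prod.ext ?_ ?_
    · simp only [Ring.lie_def, LinearMap.sub_apply, Module.End.mul_apply, Prod.fst_sub,
        LinearMap.coe_mk, AddHom.coe_mk, Derivation.commutator_apply]
      simp only [hf, hf', derivative_mul, derivative_X, mul_one, map_add, map_sub,
        smul_eq_C_mul, zero_smul, derivative_C, zero_mul]
      ring
    · simp [Ring.lie_def]

/-- The generator `e n` as an element of `W₊`, for `n ≥ 1`. -/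
def positiveWittGen (k : Type*) [Field k] (n : ℕ) (hn : 1 ≤ n) : positiveWitt k :=
  ⟨wittGen k n, LieSubalgebra.subset_lieSpan ⟨n, hn, rfl⟩⟩

/-- The element `e₁ e₍ᵢ₊₃₎ - e₂ e₍ᵢ₊₂₎ - e₍ᵢ₊₄₎` of `U(W₊)`. -/
def wittQuadric (k : Type*) [Field k] (i : ℕ) :
    UniversalEnvelopingAlgebra k (positiveWitt k) :=
  let e := fun (n : ℕ) (hn : 1 ≤ n) =>
    UniversalEnvelopingAlgebra.ι k (positiveWittGen k n hn)
  e 1 le_rfl * e (i + 3) (by omega) - e 2 (by omega) * e (i + 2) (by omega) - e (i + 4) (by omega)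

/-- The action of `U(W₊)` on `k[x] ⊕ k` induced by `divergenceRep`. -/
def envelopingDivergenceRep (k : Type*) [Field k] :
    UniversalEnvelopingAlgebra k (positiveWitt k) →ₐ[k] Module.End k (k[X] × k) :=
  UniversalEnvelopingAlgebra.lift k ((divergenceRep k).comp (positiveWitt k).incl)

theorem envelopingDivergenceRep_gen {k : Type*} [Field k] (n : ℕ) (hn : 1 ≤ n) (v : k[X] × k) :
    envelopingDivergenceRep k (UniversalEnvelopingAlgebra.ι k (positiveWittGen k n hn)) v =
      (X ^ (n + 1) * derivative v.1 + v.2 • (((n : k[X]) + 1) * X ^ n), 0) := by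
  rw [envelopingDivergenceRep, UniversalEnvelopingAlgebra.lift_ι_apply]
  ext1
  · simp [divergenceRep, positiveWittGen, wittGen, Polynomial.derivative']
  · rfl

theorem envelopingDivergenceRep_quadric {k : Type*} [Field k] (i : ℕ) (v : k[X] × k) :
    (envelopingDivergenceRep k (wittQuadric k i) v).1 = C (v.2 * ((i : k) + 1)) * X ^ (i + 4) := by
  simp only [wittQuadric, map_sub, map_mul, LinearMap.sub_apply, Module.End.mul_apply,
    envelopingDivergenceRep_gen, Prod.fst_sub, smul_eq_C_mul, derivative_mul, map_add,
    derivative_X_pow, derivative_C, derivative_natCast, derivative_one, map_natCast, C_1, C_0]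
  push_cast
  ring

/-- The right ideal of those `u ∈ U(W₊)` such that `u • v` has no `x ^ N` term for any
`v ∈ k[x] ⊕ k`. -/
def coeffAnnihilator (k : Type*) [Field k] (N : ℕ) :
    Ideal (UniversalEnvelopingAlgebra k (positiveWitt k))ᵐᵒᵖ where
  carrier := {a | ∀ v, (envelopingDivergenceRep k a.unop v).1.coeff N = 0}
  add_mem' ha hb v := by simp [ha v, hb v]
  zero_mem' v := by simp
  smul_mem' c a ha v := by
    simpa using ha (envelopingDivergenceRep k c.unop v)

theorem op_wittQuadric_mem_coeffAnnihilator_iff {k : Type*} [Field k] [CharZero k] (i j : ℕ) :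
    MulOpposite.op (wittQuadric k i) ∈ coeffAnnihilator k (j + 4) ↔ i ≠ j := by
  change (∀ v, (envelopingDivergenceRep k (wittQuadric k i) v).1.coeff (j + 4) = 0) ↔ _
  simp only [envelopingDivergenceRep_quadric, coeff_C_mul, coeff_X_pow]
  constructor
  · rintro h rfl
    have := h (0, 1)
    simp only [one_mul, if_true, mul_one] at this
    exact Nat.cast_add_one_ne_zero i this
  · intro h v
    rw [if_neg (by omega), mul_zero]

theorem positiveWitt_enveloping_not_right_noetherian (k : Type*) [Field k] [CharZero k] :
    ¬ IsNoetherianRing (UniversalEnvelopingAlgebra k (positiveWitt k))ᵐᵒᵖ := by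
  intro h
  let q : ℕ → (UniversalEnvelopingAlgebra k (positiveWitt k))ᵐᵒᵖ :=
    fun i => MulOpposite.op (wittQuadric k i)
  obtain ⟨n, hn⟩ := monotone_stabilizes_iff_noetherian.mpr h
    ⟨fun n => Ideal.span (q '' Set.Iio n),
      fun _ _ hab => Ideal.span_mono (Set.image_mono (Set.Iio_subset_Iio hab))⟩
  have hmem : q n ∈ Ideal.span (q '' Set.Iio n) := by
    have hsucc : Ideal.span (q '' Set.Iio n) = Ideal.span (q '' Set.Iio (n + 1)) :=
      hn (n + 1) n.le_succ
    rw [hsucc]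
    exact Ideal.subset_span ⟨n, Nat.lt_succ_self n, rfl⟩
  have hle : Ideal.span (q '' Set.Iio n) ≤ coeffAnnihilator k (n + 4) := by
    rw [Ideal.span_le]
    rintro _ ⟨i, hi, rfl⟩
    exact (op_wittQuadric_mem_coeffAnnihilator_iff i n).mpr (ne_of_lt hi)
  exact (op_wittQuadric_mem_coeffAnnihilator_iff n n).mp (hle hmem) rfl

/-- The antipode of an enveloping algebra, as a homomorphism to the opposite algebra. -/
def envelopingAntipode (k L : Type*) [CommRing k] [LieRing L] [LieAlgebra k L] :
    UniversalEnvelopingAlgebra k L →ₐ[k] (UniversalEnvelopingAlgebra k L)ᵐᵒᵖ :=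
  UniversalEnvelopingAlgebra.lift k
    { toFun := fun x => -MulOpposite.op (UniversalEnvelopingAlgebra.ι k x)
      map_add' := fun x y => by simp [add_comm]
      map_smul' := fun c x => by simp
      map_lie' := fun {x y} => by
        simp [Ring.lie_def, -UniversalEnvelopingAlgebra.ι_apply] }

theorem envelopingAntipode_ι {k L : Type*} [CommRing k] [LieRing L] [LieAlgebra k L] (x : L) :
    envelopingAntipode k L (UniversalEnvelopingAlgebra.ι k x) =
      -MulOpposite.op (UniversalEnvelopingAlgebra.ι k x) :=
  UniversalEnvelopingAlgebra.lift_ι_apply k _ x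

theorem envelopingAntipode_surjective (k L : Type*) [CommRing k] [LieRing L] [LieAlgebra k L] :
    Function.Surjective (envelopingAntipode k L) := by
  have h : (AlgHom.opComm (envelopingAntipode k L)).comp (envelopingAntipode k L) =
      AlgHom.id k _ := by
    refine UniversalEnvelopingAlgebra.hom_ext k (LieHom.ext fun x => ?_)
    simp [envelopingAntipode_ι, -UniversalEnvelopingAlgebra.ι_apply]
  intro a
  refine ⟨(envelopingAntipode k L a.unop).unop, MulOpposite.unop_injective ?_⟩
  exact DFunLike.congr_fun h a.unop

theorem positiveWitt_enveloping_not_noetherian (k : Type*) [Field k] [CharZero k] :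
    ¬ IsNoetherianRing (UniversalEnvelopingAlgebra k (positiveWitt k)) ∧
      ¬ IsNoetherianRing (UniversalEnvelopingAlgebra k (positiveWitt k))ᵐᵒᵖ := by
  refine ⟨fun h => ?_, positiveWitt_enveloping_not_right_noetherian k⟩
  exact positiveWitt_enveloping_not_right_noetherian k
    (isNoetherianRing_of_surjective _ _ (envelopingAntipode k (positiveWitt k)).toRingHom
      (envelopingAntipode_surjective k (positiveWitt k)))

end
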